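/- Let m ∈ {4,6}, let F = F₁x₁³ + ⋯ + F_mx_m³ with F₁,…,F_m nonzero integers, fix a partition of {1,…,m} into m/2 pairs {i_k,j_k} and rationals t_k with t_k³ = F_{j_k}/F_{i_k}, let c ∈ ℤ^m satisfy c_{j_k} = t_k·c_{i_k} for all k, and let p be a prime with p ∤ 6·F₁⋯F_m satisfying the nondegeneracy condition. Then for every integer l ≥ 2: S_c(p^l) = 2^{m/2−1}·(p−1)·p^{l(m+2)/2−1} if the Legendre symbols (c_{i_1}F_{i_1}/p), (c_{i_2}F_{i_2}/p), …, (c_{i_{m/2}}F_{i_{m/2}}/p) are all equal, and S_c(p^l) = 0 otherwise. -/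

import Mathlib

/-!
The pair `{i, j}` with ratio `t` contributes twice the same cubic sum: `t` is a `p`-adic unit and
`x ↦ t x` carries one to the other. Hence `S_c(p^l)` is the sum over units `a` modulo `p^l` of
`∏ T_k(a)²`, where `k` runs over the pairs and `T_k(a) = ∑_x e(a F_k x³ + c_k x)`, `F_k` and
`c_k` being the values at `i_k`.

Put `ϖ = p^(l - ⌊l/2⌋)`, so that `ϖ² = 0`, and elements killed by `ϖ` have cube zero. Stationary
phase (`cubicSum_stationary`) writes `T_k(a)` in terms of the two critical points `±w`, where
`3 a F_k w² = -c_k`, and `T_k(a) = 0` if there are none. The quadratic Gauss sums `G(u)` that occur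
satisfy `G(u) G(-u) = p^l` (`annGauss_mul_neg`), while `G(u)²` has the same value `κ` for all units
`u`, because every unit is a sum of two squares (`annGauss_sq_mul`). This gives
`T_k(a)² = 2 p^l + κ (e(θ) + e(-θ))` with `θ` twice the critical value.

Critical points exist exactly when `-3 a c_k F_k` is a square. If the Legendre symbols of the
`c_k F_k` differ, this fails for some `k` whatever `a` is, and the sum vanishes. If they agree, the
relevant `a` are `a₀ b²` with `b` a unit, each obtained from two `b`, and `θ_k` scales by `b⁻¹`.
Expanding the product, each nonconstant term is a Ramanujan sum at a signed combination of the
`θ_k`. Up to a common factor the `θ_k` are square roots of `c_k³ / F_k`, so nondegeneracy makes the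
combination a unit modulo `p` (`isUnit_signed_sum`) and, as `l ≥ 2`, the Ramanujan sum vanishes
(`sum_units_eq_zero`). Only the constant term `(2 p^l)^(m/2)` remains, for half of the units `a`.
-/

open scoped BigOperators

/-- `e_n(t) := exp(2πi t/n)` for `t : ZMod n`, using the canonical lift `t.val`. -/
noncomputable def en (n : ℕ) (t : ZMod n) : ℂ :=
  Complex.exp (2 * Real.pi * Complex.I * (t.val : ℂ) / (n : ℂ))

/-- The complete exponential sum `S_c(n)` for a cubic form `F` and `c ∈ ℤ^m`
(reduced mod `n`); junk value `0` at `n = 0`. -/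
noncomputable def Sc {m : ℕ} (F : MvPolynomial (Fin m) ℤ) (c : Fin m → ℤ) (n : ℕ) : ℂ :=
  if h : n = 0 then 0 else
    haveI : NeZero n := ⟨h⟩
    ∑ a : (ZMod n)ˣ, ∑ x : Fin m → ZMod n,
      en n ((a : ZMod n) * MvPolynomial.aeval x F + ∑ i, (c i : ZMod n) * x i)

/-! ### Cubic and quadratic sums over a finite local ring -/

section Local

variable {R : Type*} [CommRing R] [Fintype R] [DecidableEq R]

/-- The one-variable cubic exponential sum `∑_x ψ(A x³ + c x)`. -/
noncomputable def cubicSum (ψ : AddChar R ℂ) (A c : R) : ℂ := ∑ x, ψ (A * x ^ 3 + c * x)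

/-- The quadratic Gauss sum `∑ ψ(u d²)`, where `d` runs over the annihilator of `ϖ`. -/
noncomputable def annGauss (ψ : AddChar R ℂ) (ϖ u : R) : ℂ :=
  ∑ d, if ϖ * d = 0 then ψ (u * d ^ 2) else 0

lemma addChar_sum {ι : Type*} (ψ : AddChar R ℂ) (s : Finset ι) (f : ι → R) :
    ψ (∑ i ∈ s, f i) = ∏ i ∈ s, ψ (f i) :=
  map_prod ψ.toMonoidHom (fun i => Multiplicative.ofAdd (f i)) s

lemma sum_mul_right (ψ : AddChar R ℂ) (hψ : ψ.IsPrimitive) (b : R) :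
    ∑ z, ψ (z * b) = if b = 0 then (Fintype.card R : ℂ) else 0 := by
  rw [AddChar.sum_mulShift b hψ]; push_cast; rfl

lemma card_ne : (Fintype.card R : ℂ) ≠ 0 := by
  have : Nonempty R := ⟨0⟩
  exact_mod_cast Fintype.card_ne_zero

/-- Only the points at which `ϖ` kills the derivative contribute to the cubic sum. -/
lemma cubicSum_eq (ψ : AddChar R ℂ) (hψ : ψ.IsPrimitive) {ϖ : R} (hϖ : ϖ * ϖ = 0) (A c : R) :
    cubicSum ψ A c = ∑ y, if ϖ * (3 * A * y ^ 2 + c) = 0 then ψ (A * y ^ 3 + c * y) else 0 := by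
  have h1 : ∀ z : R, cubicSum ψ A c
      = ∑ y, ψ (z * (ϖ * (3 * A * y ^ 2 + c))) * ψ (A * y ^ 3 + c * y) := by
    intro z
    unfold cubicSum
    rw [← Equiv.sum_comp (Equiv.addRight (ϖ * z))]
    refine Finset.sum_congr rfl fun y _ => ?_
    rw [← AddChar.map_add_eq_mul]
    congr 1
    simp only [Equiv.coe_addRight]
    linear_combination (3 * A * y * z ^ 2 + A * ϖ * z ^ 3) * hϖ
  have h2 : (Fintype.card R : ℂ) * cubicSum ψ A c = (Fintype.card R : ℂ) *
      ∑ y, if ϖ * (3 * A * y ^ 2 + c) = 0 then ψ (A * y ^ 3 + c * y) else 0 := by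
    calc (Fintype.card R : ℂ) * cubicSum ψ A c = ∑ z : R, cubicSum ψ A c := by simp
      _ = ∑ z : R, ∑ y, ψ (z * (ϖ * (3 * A * y ^ 2 + c))) * ψ (A * y ^ 3 + c * y) :=
          Finset.sum_congr rfl fun z _ => h1 z
      _ = _ := by
          rw [Finset.sum_comm, Finset.mul_sum]
          refine Finset.sum_congr rfl fun y _ => ?_
          rw [← Finset.sum_mul, sum_mul_right ψ hψ]
          split_ifs <;> simp
  exact mul_left_cancel₀ card_ne h2

lemma exists_critical (ψ : AddChar R ℂ) (hψ : ψ.IsPrimitive) {ϖ : R} (hϖ : ϖ * ϖ = 0) {A c : R}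
    (h : cubicSum ψ A c ≠ 0) : ∃ y, ϖ * (3 * A * y ^ 2 + c) = 0 := by
  by_contra! hne
  apply h
  rw [cubicSum_eq ψ hψ hϖ]
  exact Finset.sum_eq_zero fun y _ => if_neg (hne y)

/-- The stationary phase formula: the points where `ϖ` kills the derivative are those differing
from one of the critical points `w`, `-w` by an element of the annihilator of `ϖ`, and there the
Taylor expansion of the phase stops at the quadratic term. -/
lemma cubicSum_stationary [IsLocalRing R] (ψ : AddChar R ℂ) (hψ : ψ.IsPrimitive) {ϖ : R}
    (hϖ : ϖ * ϖ = 0) (hϖ0 : ϖ ≠ 0) (hK : ∀ d, ϖ * d = 0 → d ^ 3 = 0) (h2 : IsUnit (2 : R))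
    (h3 : IsUnit (3 : R)) {A c w : R} (hA : IsUnit A) (hw : IsUnit w)
    (hcr : 3 * A * w ^ 2 + c = 0) :
    cubicSum ψ A c = ψ (A * w ^ 3 + c * w) * annGauss ψ ϖ (3 * A * w)
      + ψ (-(A * w ^ 3 + c * w)) * annGauss ψ ϖ (-(3 * A * w)) := by
  have key : ∀ v : R, v ^ 2 = w ^ 2 →
      (∑ y, if ϖ * (y - v) = 0 then ψ (A * y ^ 3 + c * y) else 0)
        = ψ (A * v ^ 3 + c * v) * annGauss ψ ϖ (3 * A * v) := by
    intro v hv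
    unfold annGauss
    rw [← Equiv.sum_comp (Equiv.addRight v), Finset.mul_sum]
    refine Finset.sum_congr rfl fun d _ => ?_
    simp only [Equiv.coe_addRight, add_sub_cancel_right]
    split_ifs with hd
    · rw [← AddChar.map_add_eq_mul]
      congr 1
      linear_combination A * hK d hd + d * hcr + 3 * A * d * hv
    · simp
  have hind : ∀ y : R, (if ϖ * (3 * A * y ^ 2 + c) = 0 then ψ (A * y ^ 3 + c * y) else 0)
      = (if ϖ * (y - w) = 0 then ψ (A * y ^ 3 + c * y) else 0)
        + (if ϖ * (y - -w) = 0 then ψ (A * y ^ 3 + c * y) else 0) := by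
    intro y
    have hfac : ϖ * (3 * A * y ^ 2 + c) = (3 * A) * (ϖ * (y - w) * (y - -w)) := by
      linear_combination ϖ * hcr
    have h3A : IsUnit (3 * A) := h3.mul hA
    simp only [hfac, h3A.mul_right_eq_zero]
    have hor : IsUnit (y - -w) ∨ IsUnit (-(y - w)) := by
      apply IsLocalRing.isUnit_or_isUnit_of_isUnit_add
      have : y - -w + -(y - w) = 2 * w := by ring
      rw [this]; exact h2.mul hw
    have hnot : ¬ (ϖ * (y - w) = 0 ∧ ϖ * (y - -w) = 0) := by
      rintro ⟨e1, e2⟩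
      have : 2 * w * ϖ = 0 := by linear_combination e2 - e1
      exact hϖ0 ((h2.mul hw).mul_right_eq_zero.mp this)
    have hiff : ϖ * (y - w) * (y - -w) = 0 ↔ (ϖ * (y - w) = 0 ∨ ϖ * (y - -w) = 0) := by
      constructor
      · intro h
        rcases hor with hu | hu
        · left; exact hu.mul_left_eq_zero.mp h
        · right
          rw [IsUnit.neg_iff] at hu
          exact hu.mul_left_eq_zero.mp (by linear_combination h)
      · rintro (h | h)
        · rw [h, zero_mul]
        · linear_combination (y - w) * h
    by_cases e1 : ϖ * (y - w) = 0
    · have e2 : ¬ ϖ * (y - -w) = 0 := fun e2 => hnot ⟨e1, e2⟩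
      rw [if_pos (hiff.mpr (Or.inl e1)), if_pos e1, if_neg e2, add_zero]
    · by_cases e2 : ϖ * (y - -w) = 0
      · rw [if_pos (hiff.mpr (Or.inr e2)), if_neg e1, if_pos e2, zero_add]
      · rw [if_neg (fun h => (hiff.mp h).elim e1 e2), if_neg e1, if_neg e2, add_zero]
  rw [cubicSum_eq ψ hψ hϖ, Finset.sum_congr rfl fun y _ => hind y, Finset.sum_add_distrib,
    key w rfl, key (-w) (by ring)]
  congr 3 <;> ring

lemma annGauss_mul_neg (ψ : AddChar R ℂ) (hψ : ψ.IsPrimitive) {ϖ : R}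
    (hϖ : ϖ * ϖ = 0) (h2 : IsUnit (2 : R)) {u : R} (hu : IsUnit u) :
    annGauss ψ ϖ u * annGauss ψ ϖ (-u) = Fintype.card R := by
  have inner : ∀ v : R, (∑ e, if ϖ * e = 0 then ψ (v * e) else 0)
      = ∑ z : R, if z * ϖ + v = 0 then (1 : ℂ) else 0 := by
    intro v
    refine mul_left_cancel₀ (card_ne (R := R)) ?_
    calc _ = ∑ e, ∑ z, ψ (z * (ϖ * e)) * ψ (v * e) := by
          rw [Finset.mul_sum]
          refine Finset.sum_congr rfl fun e _ => ?_
          rw [← Finset.sum_mul, sum_mul_right ψ hψ]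
          split_ifs <;> simp
      _ = ∑ z, ∑ e, ψ (e * (z * ϖ + v)) := by
          rw [Finset.sum_comm]
          refine Finset.sum_congr rfl fun z _ => Finset.sum_congr rfl fun e _ => ?_
          rw [← AddChar.map_add_eq_mul]; congr 1; ring
      _ = _ := by
          rw [Finset.mul_sum]
          refine Finset.sum_congr rfl fun z _ => ?_
          rw [sum_mul_right ψ hψ]
          split_ifs <;> simp
  -- the substitution `d = s + e` turns `u (d² - e²)` into `u s² + 2 u s e`
  have step : annGauss ψ ϖ u * annGauss ψ ϖ (-u)
      = ∑ s, if ϖ * s = 0 then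
          ψ (u * s ^ 2) * ∑ e, (if ϖ * e = 0 then ψ (2 * u * s * e) else 0) else 0 := by
    unfold annGauss
    rw [Finset.sum_mul_sum, Finset.sum_comm]
    have : ∀ e : R, (∑ d, (if ϖ * d = 0 then ψ (u * d ^ 2) else 0) *
        (if ϖ * e = 0 then ψ (-u * e ^ 2) else 0))
        = ∑ s, if ϖ * s = 0 then
          ψ (u * s ^ 2) * (if ϖ * e = 0 then ψ (2 * u * s * e) else 0) else 0 := by
      intro e
      rw [← Equiv.sum_comp (Equiv.addRight e)]
      refine Finset.sum_congr rfl fun s _ => ?_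
      simp only [Equiv.coe_addRight]
      by_cases he : ϖ * e = 0
      · simp only [mul_add, he, add_zero, if_true]
        split_ifs
        · rw [← AddChar.map_add_eq_mul, ← AddChar.map_add_eq_mul]; congr 1; ring
        · simp
      · simp [he]
    rw [Finset.sum_congr rfl fun e _ => this e, Finset.sum_comm]
    refine Finset.sum_congr rfl fun s _ => ?_
    split_ifs
    · rw [Finset.mul_sum]
    · simp
  rw [step]
  obtain ⟨v, hv⟩ := (h2.mul hu).exists_right_inv
  have sol : ∀ z s : R, z * ϖ + 2 * u * s = 0 ↔ s = -(v * z * ϖ) := by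
    intro z s
    constructor
    · intro h; linear_combination v * h - s * hv
    · rintro rfl; linear_combination (-z * ϖ) * hv
  calc _ = ∑ s, ∑ z : R, if s = -(v * z * ϖ) then (1 : ℂ) else 0 := by
        refine Finset.sum_congr rfl fun s _ => ?_
        rw [inner, Finset.mul_sum]
        split_ifs with hs
        · refine Finset.sum_congr rfl fun z _ => ?_
          simp only [sol]
          split_ifs with h
          · have : u * s ^ 2 = 0 := by
              rw [h]; linear_combination (u * v ^ 2 * z ^ 2) * hϖ
            rw [this]; simp
          · simp
        · symm
          refine Finset.sum_eq_zero fun z _ => if_neg ?_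
          rintro rfl
          exact hs (by linear_combination (-(v * z)) * hϖ)
    _ = Fintype.card R := by
        rw [Finset.sum_comm]; simp

/-- The square of the Gauss sum does not depend on the unit `u`: a rotation with
`v = a² + b²` carries the form `d² + e²` to `v (d² + e²)`. -/
lemma annGauss_sq_mul (ψ : AddChar R ℂ) (ϖ u a b : R) (hv : IsUnit (a ^ 2 + b ^ 2)) :
    annGauss ψ ϖ ((a ^ 2 + b ^ 2) * u) ^ 2 = annGauss ψ ϖ u ^ 2 := by
  obtain ⟨i, hi⟩ := hv.exists_right_inv
  have expand : ∀ x : R, annGauss ψ ϖ x ^ 2 = ∑ q : R × R,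
      if ϖ * q.1 = 0 ∧ ϖ * q.2 = 0 then ψ (x * (q.1 ^ 2 + q.2 ^ 2)) else 0 := by
    intro x
    unfold annGauss
    rw [sq, Finset.sum_mul_sum, Fintype.sum_prod_type]
    refine Finset.sum_congr rfl fun d _ => Finset.sum_congr rfl fun e _ => ?_
    by_cases h1 : ϖ * d = 0 <;> by_cases h2 : ϖ * e = 0 <;> simp [h1, h2]
    rw [← AddChar.map_add_eq_mul]; congr 1; ring
  let E : R × R ≃ R × R :=
    { toFun := fun q => (a * q.1 - b * q.2, a * q.2 + b * q.1)
      invFun := fun q => (i * (a * q.1 + b * q.2), i * (a * q.2 - b * q.1))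
      left_inv := fun q => by
        ext
        · simp only; linear_combination q.1 * hi
        · simp only; linear_combination q.2 * hi
      right_inv := fun q => by
        ext
        · simp only; linear_combination q.1 * hi
        · simp only; linear_combination q.2 * hi }
  rw [expand u, ← E.sum_comp, expand]
  refine Finset.sum_congr rfl fun q _ => ?_
  have hiff : (ϖ * (E q).1 = 0 ∧ ϖ * (E q).2 = 0) ↔ (ϖ * q.1 = 0 ∧ ϖ * q.2 = 0) := by
    change (ϖ * (a * q.1 - b * q.2) = 0 ∧ ϖ * (a * q.2 + b * q.1) = 0) ↔ _
    constructor
    · rintro ⟨e1, e2⟩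
      constructor
      · linear_combination i * a * e1 + i * b * e2 - ϖ * q.1 * hi
      · linear_combination i * a * e2 - i * b * e1 - ϖ * q.2 * hi
    · rintro ⟨e1, e2⟩
      constructor
      · linear_combination a * e1 - b * e2
      · linear_combination a * e2 + b * e1
  have hval : u * ((E q).1 ^ 2 + (E q).2 ^ 2) = (a ^ 2 + b ^ 2) * u * (q.1 ^ 2 + q.2 ^ 2) := by
    change u * ((a * q.1 - b * q.2) ^ 2 + (a * q.2 + b * q.1) ^ 2) = _
    ring
  simp only [hiff, hval]

/-- The coefficient `annGauss ψ ϖ 1 ^ 2` is left unevaluated: it only multiplies terms that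
cancel in the sum over the units. -/
lemma cubicSum_sq [IsLocalRing R] (ψ : AddChar R ℂ) (hψ : ψ.IsPrimitive) {ϖ : R}
    (hϖ : ϖ * ϖ = 0) (hϖ0 : ϖ ≠ 0) (hK : ∀ d, ϖ * d = 0 → d ^ 3 = 0) (h2 : IsUnit (2 : R))
    (h3 : IsUnit (3 : R)) (hsum : ∀ v : R, IsUnit v → ∃ a b, v = a ^ 2 + b ^ 2)
    {A c w : R} (hA : IsUnit A) (hw : IsUnit w) (hcr : 3 * A * w ^ 2 + c = 0) :
    cubicSum ψ A c ^ 2 = 2 * Fintype.card R + annGauss ψ ϖ 1 ^ 2 *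
      (ψ (2 * (A * w ^ 3 + c * w)) + ψ (-(2 * (A * w ^ 3 + c * w)))) := by
  have hu : IsUnit (3 * A * w) := (h3.mul hA).mul hw
  have hsq : ∀ u : R, IsUnit u → annGauss ψ ϖ u ^ 2 = annGauss ψ ϖ 1 ^ 2 := by
    intro u hu
    obtain ⟨a, b, rfl⟩ := hsum u hu
    simpa using annGauss_sq_mul ψ ϖ 1 a b hu
  have e1 := hsq _ hu
  have e2 := hsq _ hu.neg
  have e3 := annGauss_mul_neg ψ hψ hϖ h2 hu
  rw [cubicSum_stationary ψ hψ hϖ hϖ0 hK h2 h3 hA hw hcr]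
  set f := A * w ^ 3 + c * w
  have p1 : ψ (2 * f) = ψ f * ψ f := by rw [← AddChar.map_add_eq_mul]; congr 1; ring
  have p2 : ψ (-(2 * f)) = ψ (-f) * ψ (-f) := by rw [← AddChar.map_add_eq_mul]; congr 1; ring
  have p3 : ψ f * ψ (-f) = 1 := by rw [← AddChar.map_add_eq_mul]; simp
  rw [p1, p2]
  linear_combination ψ f ^ 2 * e1 + ψ (-f) ^ 2 * e2 + 2 * ψ f * ψ (-f) * e3
    + 2 * (Fintype.card R : ℂ) * p3

/-- Ramanujan sums at unit arguments vanish: the units are stable under translation by the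
nilpotent element `ϖ`. -/
lemma sum_units_eq_zero (ψ : AddChar R ℂ) (hψ : ψ.IsPrimitive) {ϖ : R}
    (hϖ : ϖ * ϖ = 0) (hϖ0 : ϖ ≠ 0) {θ : R} (hθ : IsUnit θ) : ∑ b : Rˣ, ψ (b * θ) = 0 := by
  obtain ⟨i, hi⟩ := hθ.exists_right_inv
  obtain ⟨r, hr⟩ : ∃ r, ψ (ϖ * r) ≠ 1 := by
    have := hψ hϖ0
    rw [AddChar.ne_one_iff] at this
    simpa using this
  have hnil : ∀ (b : Rˣ) (z : R), IsUnit ((b : R) + ϖ * z) := by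
    intro b z
    have hb : (b : R) * ((b⁻¹ : Rˣ) : R) = 1 := b.mul_inv
    refine IsUnit.of_mul_eq_one (((b⁻¹ : Rˣ) : R) * (1 - ((b⁻¹ : Rˣ) : R) * ϖ * z)) ?_
    linear_combination (1 - ((b⁻¹ : Rˣ) : R) * ϖ * z) * hb
      - (((b⁻¹ : Rˣ) : R) ^ 2 * z ^ 2) * hϖ
  let E : Rˣ ≃ Rˣ :=
    { toFun := fun b => (hnil b (r * i)).unit
      invFun := fun b => (hnil b (-(r * i))).unit
      left_inv := fun b => by ext; simp
      right_inv := fun b => by ext; simp }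
  have h1 : ∑ b : Rˣ, ψ (b * θ) = ψ (ϖ * r) * ∑ b : Rˣ, ψ (b * θ) := by
    conv_lhs => rw [← E.sum_comp]
    rw [Finset.mul_sum]
    refine Finset.sum_congr rfl fun b _ => ?_
    rw [← AddChar.map_add_eq_mul]
    congr 1
    change ((b : R) + ϖ * (r * i)) * θ = _
    linear_combination ϖ * r * hi
  have h2 : (1 - ψ (ϖ * r)) * ∑ b : Rˣ, ψ (b * θ) = 0 := by linear_combination h1
  exact (mul_eq_zero.mp h2).resolve_left (sub_ne_zero.mpr hr.symm)

/-- Summing over the units a function supported on `a₀` times the squares: every square of a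
unit has exactly two square roots. -/
lemma two_mul_sum_units [IsLocalRing R] (h2 : IsUnit (2 : R)) (g : Rˣ → ℂ) (a₀ : Rˣ)
    (hg : ∀ a, g a ≠ 0 → ∃ b, a = a₀ * b ^ 2) : 2 * ∑ a, g a = ∑ b : Rˣ, g (a₀ * b ^ 2) := by
  classical
  rw [← Finset.sum_fiberwise Finset.univ (fun b : Rˣ => a₀ * b ^ 2) (fun b => g (a₀ * b ^ 2)),
    Finset.mul_sum]
  refine Finset.sum_congr rfl fun a _ => ?_
  have : ∀ b ∈ Finset.univ.filter (fun b : Rˣ => a₀ * b ^ 2 = a), g (a₀ * b ^ 2) = g a := by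
    intro b hb
    rw [(Finset.mem_filter.mp hb).2]
  rw [Finset.sum_congr rfl this, Finset.sum_const, nsmul_eq_mul]
  by_cases h0 : g a = 0
  · simp [h0]
  obtain ⟨b, rfl⟩ := hg a h0
  have hset : Finset.univ.filter (fun x : Rˣ => a₀ * x ^ 2 = a₀ * b ^ 2) = {b, -b} := by
    ext x
    simp only [Finset.mem_filter, Finset.mem_univ, true_and, Finset.mem_insert,
      Finset.mem_singleton, mul_right_inj]
    constructor
    · intro h
      have h' : (x : R) ^ 2 = (b : R) ^ 2 := by exact_mod_cast congrArg Units.val h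
      have hor : IsUnit ((x : R) + b) ∨ IsUnit (-((x : R) - b)) := by
        apply IsLocalRing.isUnit_or_isUnit_of_isUnit_add
        have : (x : R) + b + -((x : R) - b) = 2 * b := by ring
        rw [this]; exact h2.mul b.isUnit
      rcases hor with hu | hu
      · left
        have : (x : R) - b = 0 := hu.mul_left_eq_zero.mp (by linear_combination h')
        ext; linear_combination this
      · right
        rw [IsUnit.neg_iff] at hu
        have : (x : R) + b = 0 := hu.mul_left_eq_zero.mp (by linear_combination h')
        ext; push_cast; linear_combination this
    · rintro (rfl | rfl) <;> simp
  have hne : b ≠ -b := by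
    intro h
    have h' : (b : R) = -(b : R) := by
      have := congrArg Units.val h
      simpa using this
    have : (2 : R) * b = 0 := by linear_combination h'
    exact (h2.mul b.isUnit).ne_zero this
  rw [hset, Finset.card_pair hne]
  norm_num

/-- When the product is expanded and summed over the units, only the constant term survives. -/
lemma sum_units_prod {k : ℕ} (ψ : AddChar R ℂ) (hψ : ψ.IsPrimitive) {ϖ : R}
    (hϖ : ϖ * ϖ = 0) (hϖ0 : ϖ ≠ 0) (N κ : ℂ) (θ : Fin k → R)
    (hθ : ∀ s : Fin k → SignType, s ≠ 0 → IsUnit (∑ i, (s i : R) * θ i)) :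
    ∑ b : Rˣ, ∏ i, (N + κ * (ψ (b * θ i) + ψ (-(b * θ i)))) = N ^ k * Fintype.card Rˣ := by
  have hfac : ∀ (b : Rˣ) (i : Fin k), N + κ * (ψ (b * θ i) + ψ (-(b * θ i)))
      = ∑ s : SignType, (if s = 0 then N else κ) * ψ (b * ((s : R) * θ i)) := by
    intro b i
    have : (Finset.univ : Finset SignType) = {0, -1, 1} := rfl
    rw [this, Finset.sum_insert (by decide), Finset.sum_insert (by decide), Finset.sum_singleton]
    simp
    ring
  simp_rw [hfac]
  simp_rw [Finset.prod_univ_sum, Fintype.piFinset_univ, Finset.prod_mul_distrib]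
  rw [Finset.sum_comm]
  have hψs : ∀ (s : Fin k → SignType) (b : Rˣ),
      ∏ i, ψ (b * ((s i : R) * θ i)) = ψ (b * ∑ i, (s i : R) * θ i) := by
    intro s b
    rw [Finset.mul_sum]
    exact (addChar_sum ψ _ _).symm
  simp_rw [hψs, ← Finset.mul_sum]
  rw [Finset.sum_eq_single (0 : Fin k → SignType)]
  · simp
  · intro s _ hs
    rw [sum_units_eq_zero ψ hψ hϖ hϖ0 (hθ s hs), mul_zero]
  · simp

/-- The sum over `a` of the products of squared cubic sums, evaluated when one `a₀` makes all
critical equations solvable. -/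
lemma sum_prod_cubicSum_sq [IsLocalRing R] (ψ : AddChar R ℂ) (hψ : ψ.IsPrimitive) {ϖ : R}
    (hϖ : ϖ * ϖ = 0) (hϖ0 : ϖ ≠ 0) (hK : ∀ d, ϖ * d = 0 → d ^ 3 = 0) (h2 : IsUnit (2 : R))
    (h3 : IsUnit (3 : R)) (hsum : ∀ v : R, IsUnit v → ∃ a b, v = a ^ 2 + b ^ 2)
    {k : ℕ} (hk : 0 < k) (F c : Fin k → R) (hF : ∀ i, IsUnit (F i))
    (a₀ : Rˣ) (w : Fin k → Rˣ) (hcr : ∀ i, 3 * (a₀ * F i) * (w i : R) ^ 2 + c i = 0)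
    (hgood : ∀ (a : Rˣ) (i : Fin k), cubicSum ψ (a * F i) (c i) ≠ 0 →
      ∃ v : Rˣ, 3 * (a * F i) * (v : R) ^ 2 + c i = 0)
    (hθ : ∀ s : Fin k → SignType, s ≠ 0 →
      IsUnit (∑ i, (s i : R) * (2 * (a₀ * F i * (w i : R) ^ 3 + c i * w i)))) :
    2 * ∑ a : Rˣ, ∏ i, cubicSum ψ (a * F i) (c i) ^ 2
      = (2 * Fintype.card R) ^ k * Fintype.card Rˣ := by
  rw [two_mul_sum_units h2 _ a₀]
  · rw [← sum_units_prod ψ hψ hϖ hϖ0 (2 * Fintype.card R) (annGauss ψ ϖ 1 ^ 2) _ hθ,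
      ← Equiv.sum_comp (Equiv.inv Rˣ)]
    refine Finset.sum_congr rfl fun b _ => Finset.prod_congr rfl fun i _ => ?_
    have hb : (b : R) * ((b⁻¹ : Rˣ) : R) = 1 := b.mul_inv
    simp only [Equiv.inv_apply]
    rw [cubicSum_sq ψ hψ hϖ hϖ0 hK h2 h3 hsum (w := b * w i)
      ((Units.isUnit _).mul (hF i)) (b.isUnit.mul (w i).isUnit)]
    · have : ((a₀ * b⁻¹ ^ 2 : Rˣ) : R) * F i * ((b : R) * w i) ^ 3 + c i * ((b : R) * w i)
          = b * (a₀ * F i * (w i : R) ^ 3 + c i * w i) := by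
        push_cast
        linear_combination (a₀ * F i * (w i : R) ^ 3 * b * (1 + b * ((b⁻¹ : Rˣ) : R))) * hb
      rw [this, mul_left_comm]
    · push_cast
      linear_combination hcr i
        + 3 * a₀ * F i * (w i : R) ^ 2 * (1 + b * ((b⁻¹ : Rˣ) : R)) * hb
  · intro a ha
    rw [Finset.prod_ne_zero_iff] at ha
    have h0 := ha ⟨0, hk⟩ (Finset.mem_univ _)
    obtain ⟨v, hv⟩ := hgood a ⟨0, hk⟩ (by
      intro h; rw [h] at h0; simp at h0)
    refine ⟨w ⟨0, hk⟩ * v⁻¹, ?_⟩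
    have h : 3 * F ⟨0, hk⟩ * ((a : R) * (v : R) ^ 2 - a₀ * (w ⟨0, hk⟩ : R) ^ 2) = 0 := by
      linear_combination hv - hcr ⟨0, hk⟩
    have h' := (h3.mul (hF ⟨0, hk⟩)).mul_right_eq_zero.mp h
    have h'' : a * v ^ 2 = a₀ * w ⟨0, hk⟩ ^ 2 := by
      ext; push_cast; linear_combination h'
    rw [mul_pow, ← mul_assoc, ← h'']
    simp

lemma cubicSum_twist (ψ : AddChar R ℂ) (A c : R) {τ : R} (hτ : IsUnit τ) :
    cubicSum ψ (A * τ ^ 3) (c * τ) = cubicSum ψ A c := by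
  unfold cubicSum
  obtain ⟨u, rfl⟩ := hτ
  rw [← Equiv.sum_comp (Units.mulLeft u) fun x => ψ (A * x ^ 3 + c * x)]
  refine Finset.sum_congr rfl fun x _ => ?_
  simp only [Units.mulLeft_apply]
  congr 1
  ring

end Local
/-! ### The rings `ℤ/p^l` -/

section PrimePower

variable (p l : ℕ)

/-- Reduction `ℤ/p^l → ℤ/p`. -/
noncomputable def redMod (hl : l ≠ 0) : ZMod (p ^ l) →+* ZMod p :=
  ZMod.castHom (dvd_pow_self p hl) (ZMod p)

variable {p l} [Fact p.Prime] (hl : l ≠ 0)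

lemma exists_natCast (x : ZMod (p ^ l)) : ∃ n : ℕ, (n : ZMod (p ^ l)) = x := by
  have : NeZero (p ^ l) := ⟨pow_ne_zero _ (Fact.out : p.Prime).ne_zero⟩
  exact ⟨x.val, ZMod.natCast_zmod_val x⟩

lemma isUnit_iff_redMod (x : ZMod (p ^ l)) : IsUnit x ↔ redMod p l hl x ≠ 0 := by
  obtain ⟨n, rfl⟩ := exists_natCast x
  rw [ZMod.isUnit_iff_coprime, map_natCast, Ne, ZMod.natCast_eq_zero_iff,
    Nat.coprime_pow_right_iff (Nat.pos_of_ne_zero hl), Nat.coprime_comm,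
    (Fact.out : p.Prime).coprime_iff_not_dvd]

lemma dvd_of_redMod (x : ZMod (p ^ l)) (h : redMod p l hl x = 0) : (p : ZMod (p ^ l)) ∣ x := by
  obtain ⟨n, rfl⟩ := exists_natCast x
  rw [map_natCast, ZMod.natCast_eq_zero_iff] at h
  exact_mod_cast Nat.cast_dvd_cast h

lemma redMod_surjective : Function.Surjective (redMod p l hl) :=
  ZMod.castHom_surjective _

lemma isLocalRing_zmod (hl : l ≠ 0) : IsLocalRing (ZMod (p ^ l)) := by
  have : Nontrivial (ZMod (p ^ l)) :=
    (redMod p l hl).domain_nontrivial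
  refine IsLocalRing.of_isUnit_or_isUnit_of_isUnit_add fun a b h => ?_
  simp only [isUnit_iff_redMod hl, map_add] at h ⊢
  by_contra! hc
  rw [hc.1, hc.2, add_zero] at h
  exact h rfl

/-- A unit which is a square modulo `p` is a square: if `u ≡ v²` modulo `p` then
`u ^ p^(l-1) = v ^ (2 p^(l-1))`, and `p^(l-1)` is odd. -/
lemma exists_sqrt (hp2 : p ≠ 2) (u : ZMod (p ^ l)) (hu : IsUnit u)
    (hs : IsSquare (redMod p l hl u)) : ∃ w, w ^ 2 = u := by
  obtain ⟨s, hs⟩ := hs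
  obtain ⟨v, rfl⟩ := redMod_surjective hl s
  have hd := dvd_of_redMod hl (u - v ^ 2) (by rw [map_sub, map_pow, hs]; ring)
  have h1 := dvd_sub_pow_of_dvd_sub hd (l - 1)
  have h0 : (p : ZMod (p ^ l)) ^ (l - 1 + 1) = 0 := by
    rw [Nat.sub_add_cancel (Nat.pos_of_ne_zero hl)]
    exact_mod_cast ZMod.natCast_self (p ^ l)
  rw [h0, zero_dvd_iff] at h1
  obtain ⟨n, hn⟩ : Odd (p ^ (l - 1)) := ((Fact.out : p.Prime).odd_of_ne_two hp2).pow
  rw [hn] at h1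
  obtain ⟨i, hi⟩ := hu.exists_right_inv
  refine ⟨v ^ (2 * n + 1) * i ^ n, ?_⟩
  have hi' : u ^ (2 * n) * i ^ (2 * n) = 1 := by rw [← mul_pow, hi, one_pow]
  have e1 : (v ^ (2 * n + 1) * i ^ n) ^ 2 = (v ^ 2) ^ (2 * n + 1) * i ^ (2 * n) := by ring
  rw [e1]
  have e2 : u ^ (2 * n + 1) = u ^ (2 * n) * u := pow_succ _ _
  linear_combination u * hi' - i ^ (2 * n) * h1 + i ^ (2 * n) * e2

/-- Every unit is a sum of two squares: solve modulo `p` and lift a nonzero summand. -/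
lemma exists_sum_two_sq (hl : l ≠ 0) (hp2 : p ≠ 2) (v : ZMod (p ^ l)) (hv : IsUnit v) :
    ∃ a b, v = a ^ 2 + b ^ 2 := by
  obtain ⟨x, y, hxy⟩ := ZMod.sq_add_sq p (redMod p l hl v)
  have key : ∀ x y : ZMod p, x ^ 2 + y ^ 2 = redMod p l hl v → x ≠ 0 →
      ∃ a b, v = a ^ 2 + b ^ 2 := by
    intro x y hxy hx
    obtain ⟨b, rfl⟩ := redMod_surjective hl y
    have hr : redMod p l hl (v - b ^ 2) = x ^ 2 := by
      rw [map_sub, map_pow, ← hxy]; ring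
    obtain ⟨a, ha⟩ := exists_sqrt hl hp2 (v - b ^ 2)
      ((isUnit_iff_redMod hl _).mpr (by rw [hr]; exact pow_ne_zero _ hx))
      ⟨x, by rw [hr]; ring⟩
    exact ⟨a, b, by rw [ha]; ring⟩
  by_cases hx : x = 0
  · refine key y x (by rw [← hxy]; ring) ?_
    rintro rfl
    rw [hx] at hxy
    exact (isUnit_iff_redMod hl v).mp hv (by rw [← hxy]; ring)
  · exact key x y hxy hx

lemma primePow_sq : ((p : ZMod (p ^ l)) ^ (l - l / 2)) * (p : ZMod (p ^ l)) ^ (l - l / 2) = 0 := by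
  rw [← pow_add]
  have : ((p ^ (l - l / 2 + (l - l / 2)) : ℕ) : ZMod (p ^ l)) = 0 := by
    rw [ZMod.natCast_eq_zero_iff]
    exact pow_dvd_pow p (by omega)
  exact_mod_cast this

lemma primePow_ne (hl2 : 2 ≤ l) : (p : ZMod (p ^ l)) ^ (l - l / 2) ≠ 0 := by
  intro h
  have h' : ((p ^ (l - l / 2) : ℕ) : ZMod (p ^ l)) = 0 := by exact_mod_cast h
  rw [ZMod.natCast_eq_zero_iff,
    Nat.pow_dvd_pow_iff_le_right (Fact.out : p.Prime).one_lt] at h'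
  omega

/-- The annihilator of `p^(l - ⌊l/2⌋)` is generated by `p^⌊l/2⌋`, whose cube is zero for
`l ≥ 2`. -/
lemma primePow_ann (hl2 : 2 ≤ l) (d : ZMod (p ^ l))
    (h : (p : ZMod (p ^ l)) ^ (l - l / 2) * d = 0) : d ^ 3 = 0 := by
  obtain ⟨n, rfl⟩ := exists_natCast d
  have h' : ((p ^ (l - l / 2) * n : ℕ) : ZMod (p ^ l)) = 0 := by exact_mod_cast h
  rw [ZMod.natCast_eq_zero_iff] at h'
  have hs : p ^ l = p ^ (l - l / 2) * p ^ (l / 2) := by rw [← pow_add]; congr 1; omega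
  have h1 : p ^ (l / 2) ∣ n := by
    rw [hs] at h'
    exact Nat.dvd_of_mul_dvd_mul_left (pow_pos (Fact.out : p.Prime).pos _) h'
  have h2 : p ^ l ∣ n ^ 3 :=
    (pow_dvd_pow p (show l ≤ l / 2 * 3 by omega)).trans (by
      rw [pow_mul]; exact pow_dvd_pow_of_dvd h1 3)
  have := (ZMod.natCast_eq_zero_iff _ _).mpr h2
  exact_mod_cast this

/-- If a cubic sum is nonzero, its phase has an exact critical point: one modulo `p` exists by
`exists_critical`, and it lifts. -/
lemma exists_critical_unit [NeZero (p ^ l)] (hl2 : 2 ≤ l) (hp2 : p ≠ 2)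
    (h3 : IsUnit (3 : ZMod (p ^ l))) {A c : ZMod (p ^ l)} (hA : IsUnit A) (hc : IsUnit c)
    (h : cubicSum ZMod.stdAddChar A c ≠ 0) :
    ∃ w : (ZMod (p ^ l))ˣ, 3 * A * (w : ZMod (p ^ l)) ^ 2 + c = 0 := by
  have hl : l ≠ 0 := by omega
  obtain ⟨y, hy⟩ := exists_critical _ (ZMod.isPrimitive_stdAddChar _) primePow_sq h
  have hy0 : redMod p l hl (3 * A * y ^ 2 + c) = 0 := by
    by_contra hne
    exact primePow_ne hl2 (((isUnit_iff_redMod hl _).mpr hne).mul_left_eq_zero.mp hy)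
  obtain ⟨i, hi⟩ := (h3.mul hA).exists_right_inv
  have hiu : IsUnit i := IsUnit.of_mul_eq_one (3 * A) (by rw [mul_comm]; exact hi)
  have hu : IsUnit (-(c * i)) := (hc.mul hiu).neg
  obtain ⟨w, hw⟩ := exists_sqrt hl hp2 _ hu ⟨redMod p l hl y, by
    have hi' := congrArg (redMod p l hl) hi
    simp only [map_add, map_mul, map_pow, map_neg, map_one] at hy0 hi' ⊢
    linear_combination (redMod p l hl y) ^ 2 * hi' - (redMod p l hl i) * hy0⟩
  have hwu : IsUnit w := by
    rw [← hw] at hu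
    exact (isUnit_pow_iff two_ne_zero).mp hu
  refine ⟨hwu.unit, ?_⟩
  rw [IsUnit.unit_spec, hw]
  linear_combination -c * hi

lemma intCast_isUnit_iff (hl : l ≠ 0) (x : ℤ) :
    IsUnit (x : ZMod (p ^ l)) ↔ ¬ (p : ℤ) ∣ x := by
  rw [isUnit_iff_redMod hl, map_intCast, Ne, ZMod.intCast_zmod_eq_zero_iff_dvd]

/-- The rational ratio `t` attached to a pair is a `p`-adic unit; `τ` is its image in
`ℤ/p^l`. -/
lemma exists_ratio (hl : l ≠ 0) {FI FJ cI cJ : ℤ} {t : ℚ}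
    (hI : ¬ (p : ℤ) ∣ FI) (hJ : ¬ (p : ℤ) ∣ FJ)
    (ht : t ^ 3 = (FJ : ℚ) / FI) (hc : (cJ : ℚ) = t * cI) :
    ∃ τ : ZMod (p ^ l), IsUnit τ ∧ (FJ : ZMod (p ^ l)) = FI * τ ^ 3 ∧
      (cJ : ZMod (p ^ l)) = cI * τ := by
  have hp : Prime (p : ℤ) := Nat.prime_iff_prime_int.mp Fact.out
  have hFI : (FI : ℚ) ≠ 0 := by
    rintro h
    rw [Int.cast_eq_zero] at h
    exact hI (h ▸ dvd_zero _)
  have hd0 : (t.den : ℚ) ≠ 0 := by exact_mod_cast t.den_ne_zero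
  have htd : t * t.den = t.num := Rat.mul_den_eq_num t
  have e1 : t.num ^ 3 * FI = FJ * (t.den : ℤ) ^ 3 := by
    have : (t.num : ℚ) ^ 3 * FI = FJ * (t.den : ℚ) ^ 3 := by
      rw [eq_div_iff hFI] at ht
      rw [← htd, ← ht]; ring
    exact_mod_cast this
  have e2 : cJ * (t.den : ℤ) = t.num * cI := by
    have : (cJ : ℚ) * t.den = t.num * cI := by rw [hc, ← htd]; ring
    exact_mod_cast this
  have hcop : ¬ ((p : ℤ) ∣ t.num ∧ (p : ℤ) ∣ (t.den : ℤ)) := by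
    rintro ⟨h1, h2⟩
    have h1' : p ∣ t.num.natAbs := Int.natCast_dvd.mp h1
    have h2' : p ∣ t.den := Int.natCast_dvd_natCast.mp h2
    exact Nat.not_coprime_of_dvd_of_dvd (Fact.out : p.Prime).one_lt h1' h2' t.reduced
  have hden : ¬ (p : ℤ) ∣ (t.den : ℤ) := by
    intro h
    have : (p : ℤ) ∣ t.num ^ 3 * FI := by
      rw [e1]; exact (dvd_pow h three_ne_zero).mul_left _
    rcases hp.dvd_or_dvd this with h' | h'
    · exact hcop ⟨hp.dvd_of_dvd_pow h', h⟩
    · exact hI h'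
  have hnum : ¬ (p : ℤ) ∣ t.num := by
    intro h
    have : (p : ℤ) ∣ FJ * (t.den : ℤ) ^ 3 := by
      rw [← e1]; exact (dvd_pow h three_ne_zero).mul_right _
    rcases hp.dvd_or_dvd this with h' | h'
    · exact hJ h'
    · exact hden (hp.dvd_of_dvd_pow h')
  have ud := (intCast_isUnit_iff (l := l) hl _).mpr hden
  have un := (intCast_isUnit_iff (l := l) hl _).mpr hnum
  obtain ⟨i, hi⟩ := ud.exists_right_inv
  have hiu : IsUnit i := IsUnit.of_mul_eq_one _ (by rw [mul_comm]; exact hi)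
  have e1' := congrArg (Int.cast : ℤ → ZMod (p ^ l)) e1
  have e2' := congrArg (Int.cast : ℤ → ZMod (p ^ l)) e2
  push_cast at e1' e2' hi
  set d : ZMod (p ^ l) := (t.den : ZMod (p ^ l))
  refine ⟨(t.num : ZMod (p ^ l)) * i, un.mul hiu, ?_, ?_⟩
  · linear_combination -(FJ * (1 + d * i + (d * i) ^ 2)) * hi - i ^ 3 * e1'
  · linear_combination i * e2' - cJ * hi

end PrimePower

/-! ### Reduction of `S_c(p^l)` to cubic sums -/

lemma en_eq_stdAddChar (n : ℕ) [NeZero n] (x : ZMod n) : en n x = ZMod.stdAddChar x := by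
  rw [ZMod.stdAddChar_apply, ZMod.toCircle_apply, en]

/-- For a diagonal form the inner sum factors over the coordinates. -/
lemma Sc_diagonal {m : ℕ} (Fc c : Fin m → ℤ) (n : ℕ) [NeZero n] :
    Sc (∑ i, MvPolynomial.C (Fc i) * MvPolynomial.X i ^ 3) c n
      = ∑ a : (ZMod n)ˣ, ∏ i, cubicSum ZMod.stdAddChar ((a : ZMod n) * (Fc i : ZMod n)) (c i) := by
  unfold Sc
  rw [dif_neg (NeZero.ne n)]
  refine Finset.sum_congr rfl fun a _ => ?_
  simp only [cubicSum]
  rw [Finset.prod_univ_sum, Fintype.piFinset_univ]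
  refine Finset.sum_congr rfl fun x _ => ?_
  have h : (a : ZMod n) * MvPolynomial.aeval x
      (∑ i, MvPolynomial.C (Fc i) * MvPolynomial.X i ^ 3) + ∑ i, (c i : ZMod n) * x i
      = ∑ i, ((a : ZMod n) * Fc i * x i ^ 3 + c i * x i) := by
    simp [map_sum, Finset.mul_sum, Finset.sum_add_distrib, mul_assoc]
  rw [en_eq_stdAddChar, h]
  exact addChar_sum _ _ _

/-! ### Nondegeneracy and Legendre symbols -/

/-- Nondegeneracy modulo `p` makes every nontrivial signed combination of the critical phases
a unit: up to a common scalar, the critical phases are square roots of `c³ / F`. -/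
lemma isUnit_signed_sum {p l k : ℕ} [Fact p.Prime] (hl : l ≠ 0) (F c : Fin k → ℤ)
    (h2 : IsUnit (2 : ZMod (p ^ l)))
    (hnd : ∀ (S : Finset (Fin k)), S.Nonempty →
      ∀ r : Fin k → AlgebraicClosure (ZMod p),
        (∀ a ∈ S, (r a) ^ 2 * ((F a : ℤ) : AlgebraicClosure (ZMod p)) =
          ((c a : ℤ) : AlgebraicClosure (ZMod p)) ^ 3) →
        (∑ a ∈ S, r a) ≠ 0)
    (a₀ : (ZMod (p ^ l))ˣ) (w : Fin k → (ZMod (p ^ l))ˣ)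
    (hcr : ∀ i, 3 * ((a₀ : ZMod (p ^ l)) * F i) * (w i : ZMod (p ^ l)) ^ 2 + c i = 0)
    (s : Fin k → SignType) (hs : s ≠ 0) :
    IsUnit (∑ i, (s i : ZMod (p ^ l)) *
      (2 * (a₀ * F i * (w i : ZMod (p ^ l)) ^ 3 + c i * w i))) := by
  set Φ : ZMod (p ^ l) →+* AlgebraicClosure (ZMod p) :=
    (algebraMap (ZMod p) (AlgebraicClosure (ZMod p))).comp (redMod p l hl) with hΦ
  have hΦu : ∀ x, IsUnit x ↔ Φ x ≠ 0 := by
    intro x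
    rw [isUnit_iff_redMod hl, hΦ, RingHom.comp_apply, Ne, Ne,
      map_eq_zero (algebraMap (ZMod p) (AlgebraicClosure (ZMod p)))]
  rw [hΦu]
  have h2' : (2 : AlgebraicClosure (ZMod p)) ≠ 0 := by
    have := (hΦu 2).mp h2
    rwa [map_ofNat] at this
  obtain ⟨μ, hμ⟩ := IsAlgClosed.exists_pow_nat_eq (-27 * Φ a₀ / 2 ^ 4) two_pos
  rw [eq_div_iff (pow_ne_zero _ h2')] at hμ
  set θ : Fin k → ZMod (p ^ l) := fun i => 2 * (a₀ * F i * (w i : ZMod (p ^ l)) ^ 3 + c i * w i)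
    with hθ
  have hθc : ∀ i, 27 * a₀ * θ i ^ 2 * F i = -16 * (c i : ZMod (p ^ l)) ^ 3 := by
    intro i
    have e1 : 3 * θ i = 4 * c i * w i := by
      rw [hθ]; linear_combination 2 * (w i : ZMod (p ^ l)) * hcr i
    linear_combination 3 * a₀ * F i * (3 * θ i + 4 * c i * w i) * e1
      + 16 * (c i : ZMod (p ^ l)) ^ 2 * hcr i
  have hne : (Finset.univ.filter fun i => s i ≠ 0).Nonempty := by
    obtain ⟨i, hi⟩ := Function.ne_iff.mp hs
    exact ⟨i, by simpa using hi⟩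
  have key := hnd _ hne (fun i => μ * Φ ((s i : ZMod (p ^ l)) * θ i)) (by
    intro i hi
    have hi0 : s i ≠ 0 := (Finset.mem_filter.mp hi).2
    have hs2 : (s i : ZMod (p ^ l)) ^ 2 = 1 := by
      cases h : s i
      · exact absurd h hi0
      · simp
      · simp
    have hs2' := congrArg Φ hs2
    have hc' := congrArg Φ (hθc i)
    simp only [map_mul, map_pow, map_neg, map_ofNat, map_intCast, map_one] at hs2' hc' ⊢
    refine mul_left_cancel₀ (pow_ne_zero 4 h2') ?_
    linear_combination (Φ (s i : ZMod (p ^ l))) ^ 2 * Φ (θ i) ^ 2 * (F i) * hμ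
      - (Φ (s i : ZMod (p ^ l))) ^ 2 * hc' + 16 * (c i : AlgebraicClosure (ZMod p)) ^ 3 * hs2')
  have hsum : ∑ i ∈ Finset.univ.filter (fun i => s i ≠ 0), μ * Φ ((s i : ZMod (p ^ l)) * θ i)
      = μ * Φ (∑ i, (s i : ZMod (p ^ l)) * θ i) := by
    rw [map_sum, Finset.mul_sum, Finset.sum_filter]
    refine Finset.sum_congr rfl fun i _ => ?_
    split_ifs with h
    · rfl
    · rw [not_not.mp h]; simp
  rw [hsum] at key
  exact right_ne_zero_of_mul key

/-- If all the Legendre symbols agree, one `a₀` makes all critical equations solvable. -/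
lemma exists_common_critical {p l k : ℕ} [Fact p.Prime] (hl : l ≠ 0) (hp2 : p ≠ 2) (hk : 0 < k)
    (F c : Fin k → ℤ) (h3 : IsUnit (3 : ZMod (p ^ l)))
    (hF : ∀ i, IsUnit (F i : ZMod (p ^ l))) (hc : ∀ i, IsUnit (c i : ZMod (p ^ l)))
    (hleg : ∀ a b, legendreSym p (c a * F a) = legendreSym p (c b * F b)) :
    ∃ (a₀ : (ZMod (p ^ l))ˣ) (w : Fin k → (ZMod (p ^ l))ˣ),
      ∀ i, 3 * ((a₀ : ZMod (p ^ l)) * F i) * (w i : ZMod (p ^ l)) ^ 2 + c i = 0 := by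
  have hu0 : IsUnit (-3 * (c ⟨0, hk⟩ * F ⟨0, hk⟩) : ZMod (p ^ l)) :=
    h3.neg.mul ((hc _).mul (hF _))
  have hex : ∀ i, ∃ w : (ZMod (p ^ l))ˣ,
      3 * ((hu0.unit : ZMod (p ^ l)) * F i) * (w : ZMod (p ^ l)) ^ 2 + c i = 0 := by
    intro i
    -- a square root `v` of `c₀ F₀ cᵢ Fᵢ` gives the critical point `v / (3 c₀ F₀ Fᵢ)`
    have hP : IsUnit (((c ⟨0, hk⟩ * F ⟨0, hk⟩ * (c i * F i) : ℤ)) : ZMod (p ^ l)) := by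
      push_cast
      exact ((hc _).mul (hF _)).mul ((hc _).mul (hF _))
    have hne : ∀ j, ((c j * F j : ℤ) : ZMod p) ≠ 0 := by
      intro j
      have := (isUnit_iff_redMod hl _).mp ((hc j).mul (hF j))
      rw [map_mul, map_intCast, map_intCast] at this
      exact_mod_cast this
    have hsq : IsSquare (((c ⟨0, hk⟩ * F ⟨0, hk⟩ * (c i * F i) : ℤ)) : ZMod p) := by
      rw [← legendreSym.eq_one_iff p
        (by rw [Int.cast_mul]; exact mul_ne_zero (hne _) (hne _)),
        legendreSym.mul, hleg ⟨0, hk⟩ i, ← sq]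
      exact legendreSym.sq_one p (hne i)
    obtain ⟨v, hv⟩ := exists_sqrt hl hp2 _ hP (by rwa [map_intCast])
    have hvu : IsUnit v := by
      rw [← hv] at hP
      exact (isUnit_pow_iff two_ne_zero).mp hP
    have hDu : IsUnit (3 * (c ⟨0, hk⟩ * F ⟨0, hk⟩ * F i) : ZMod (p ^ l)) :=
      h3.mul (((hc _).mul (hF _)).mul (hF _))
    obtain ⟨j, hj⟩ := hDu.exists_right_inv
    have hju : IsUnit j := IsUnit.of_mul_eq_one _ (by rw [mul_comm]; exact hj)
    refine ⟨(hvu.mul hju).unit, ?_⟩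
    simp only [IsUnit.unit_spec]
    push_cast at hv
    set x : ZMod (p ^ l) := (c ⟨0, hk⟩ : ZMod (p ^ l))
    set y : ZMod (p ^ l) := (F ⟨0, hk⟩ : ZMod (p ^ l))
    linear_combination (-9 * x * y * F i * j ^ 2) * hv
      - (c i : ZMod (p ^ l)) * (1 + 3 * (x * y * F i) * j) * hj
  choose w hw using hex
  exact ⟨hu0.unit, w, hw⟩

theorem stmt9 (m k : ℕ) (hmk : m = 2 * k) (hm46 : m = 4 ∨ m = 6)
    (Fc : Fin m → ℤ) (hFc : ∀ i, Fc i ≠ 0)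
    (I J : Fin k → Fin m) (hIJ : Function.Bijective (Sum.elim I J))
    (t : Fin k → ℚ) (ht : ∀ a, (t a) ^ 3 = (Fc (J a) : ℚ) / (Fc (I a) : ℚ))
    (c : Fin m → ℤ) (hcp : ∀ a, (c (J a) : ℚ) = t a * (c (I a) : ℚ))
    (p : ℕ) [Fact p.Prime] (hp6 : ¬ ((p : ℤ) ∣ 6 * ∏ i, Fc i))
    (hnd : ∀ (S : Finset (Fin k)), S.Nonempty →
      ∀ r : Fin k → AlgebraicClosure (ZMod p),
        (∀ a ∈ S, (r a) ^ 2 * ((Fc (I a) : ℤ) : AlgebraicClosure (ZMod p)) =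
          ((c (I a) : ℤ) : AlgebraicClosure (ZMod p)) ^ 3) →
        (∑ a ∈ S, r a) ≠ 0)
    (l : ℕ) (hl : 2 ≤ l) :
    ((∀ a b : Fin k,
        legendreSym p (c (I a) * Fc (I a)) = legendreSym p (c (I b) * Fc (I b))) →
      Sc (∑ i, MvPolynomial.C (Fc i) * MvPolynomial.X i ^ 3) c (p ^ l)
        = (2 : ℂ) ^ (k - 1) * ((p : ℂ) - 1) * (p : ℂ) ^ (l * (k + 1) - 1)) ∧
    ((¬ ∀ a b : Fin k,
        legendreSym p (c (I a) * Fc (I a)) = legendreSym p (c (I b) * Fc (I b))) →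
      Sc (∑ i, MvPolynomial.C (Fc i) * MvPolynomial.X i ^ 3) c (p ^ l) = 0) := by
  have hl0 : l ≠ 0 := by omega
  have hk : 0 < k := by omega
  have hpp : p.Prime := Fact.out
  have hne : NeZero (p ^ l) := ⟨pow_ne_zero _ hpp.ne_zero⟩
  have hloc : IsLocalRing (ZMod (p ^ l)) := isLocalRing_zmod hl0
  have h6 : ¬ (p : ℤ) ∣ 6 := fun h => hp6 (h.mul_right _)
  have hd2 : ¬ (p : ℤ) ∣ 2 := fun h => h6 (h.trans (by norm_num))
  have hd3 : ¬ (p : ℤ) ∣ 3 := fun h => h6 (h.trans (by norm_num))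
  have hp2 : p ≠ 2 := by
    rintro rfl
    exact hd2 (by norm_num)
  have h2 : IsUnit (2 : ZMod (p ^ l)) := by
    exact_mod_cast (intCast_isUnit_iff (l := l) hl0 2).mpr hd2
  have h3 : IsUnit (3 : ZMod (p ^ l)) := by
    exact_mod_cast (intCast_isUnit_iff (l := l) hl0 3).mpr hd3
  have hdF : ∀ i, ¬ (p : ℤ) ∣ Fc i := fun i h =>
    hp6 ((h.trans (Finset.dvd_prod_of_mem Fc (Finset.mem_univ i))).mul_left _)
  have hF : ∀ i, IsUnit (Fc i : ZMod (p ^ l)) := fun i =>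
    (intCast_isUnit_iff (l := l) hl0 _).mpr (hdF i)
  have hc : ∀ a, IsUnit (c (I a) : ZMod (p ^ l)) := by
    intro a
    rw [intCast_isUnit_iff hl0]
    intro h
    -- if `p ∣ c`, then `r = 0` violates nondegeneracy for a singleton
    refine hnd {a} (Finset.singleton_nonempty a) 0 (fun b hb => ?_) (by simp)
    rw [Finset.mem_singleton.mp hb]
    have : ((c (I a) : ℤ) : AlgebraicClosure (ZMod p)) = 0 := by
      rw [← map_intCast (algebraMap (ZMod p) (AlgebraicClosure (ZMod p))),
        (ZMod.intCast_zmod_eq_zero_iff_dvd _ _).mpr h, map_zero]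
    rw [this]
    simp
  -- `x ↦ τ x` identifies the two cubic sums of a pair
  have hSc : Sc (∑ i, MvPolynomial.C (Fc i) * MvPolynomial.X i ^ 3) c (p ^ l)
      = ∑ a : (ZMod (p ^ l))ˣ, ∏ i : Fin k,
        cubicSum ZMod.stdAddChar ((a : ZMod (p ^ l)) * (Fc (I i) : ZMod (p ^ l))) (c (I i)) ^ 2 := by
    rw [Sc_diagonal]
    refine Finset.sum_congr rfl fun a _ => ?_
    rw [← hIJ.prod_comp fun i =>
      cubicSum ZMod.stdAddChar ((a : ZMod (p ^ l)) * (Fc i : ZMod (p ^ l))) (c i : ZMod (p ^ l)),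
      Fintype.prod_sum_type, ← Finset.prod_mul_distrib]
    refine Finset.prod_congr rfl fun i _ => ?_
    obtain ⟨τ, hτ, hFτ, hcτ⟩ :=
      exists_ratio (l := l) hl0 (hdF (I i)) (hdF (J i)) (ht i) (hcp i)
    simp only [Sum.elim_inl, Sum.elim_inr]
    rw [hFτ, hcτ, ← mul_assoc, cubicSum_twist _ _ _ hτ, sq]
  have hgood : ∀ (a : (ZMod (p ^ l))ˣ) (i : Fin k),
      cubicSum ZMod.stdAddChar ((a : ZMod (p ^ l)) * (Fc (I i) : ZMod (p ^ l))) (c (I i)) ≠ 0 →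
      ∃ v : (ZMod (p ^ l))ˣ,
        3 * ((a : ZMod (p ^ l)) * (Fc (I i) : ZMod (p ^ l))) * (v : ZMod (p ^ l)) ^ 2 + c (I i) = 0 :=
    fun a i h => exists_critical_unit hl hp2 h3 (a.isUnit.mul (hF _)) (hc i) h
  rw [hSc]
  constructor
  · intro hleg
    obtain ⟨a₀, w, hcr⟩ := exists_common_critical (l := l) hl0 hp2 hk (fun i => Fc (I i))
      (fun i => c (I i)) h3 (fun i => hF _) hc hleg
    have hmain := sum_prod_cubicSum_sq ZMod.stdAddChar (ZMod.isPrimitive_stdAddChar _) primePow_sq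
      (primePow_ne hl) (primePow_ann hl) h2 h3 (exists_sum_two_sq hl0 hp2) hk
      (fun i => (Fc (I i) : ZMod (p ^ l))) (fun i => (c (I i) : ZMod (p ^ l))) (fun i => hF _)
      a₀ w hcr hgood
      (isUnit_signed_sum hl0 (fun i => Fc (I i)) (fun i => c (I i)) h2 hnd a₀ w hcr)
    rw [ZMod.card, ZMod.card_units_eq_totient, Nat.totient_prime_pow hpp (by omega)] at hmain
    push_cast [Nat.cast_sub hpp.one_le] at hmain
    refine mul_left_cancel₀ (two_ne_zero (α := ℂ)) (hmain.trans ?_)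
    obtain ⟨n, rfl⟩ : ∃ n, k = n + 1 := ⟨k - 1, by omega⟩
    have hexp : l * (n + 1 + 1) - 1 = l * (n + 1) + (l - 1) := by
      rw [mul_add l (n + 1) 1]; omega
    rw [hexp, pow_add (p : ℂ), pow_mul (p : ℂ), mul_pow, Nat.add_sub_cancel]
    ring
  · intro hleg
    refine Finset.sum_eq_zero fun a _ => ?_
    by_contra hprod
    apply hleg
    rw [← Ne, Finset.prod_ne_zero_iff] at hprod
    -- every `c F` is `-3 a` times a square
    have hq : ∀ i, legendreSym p (c (I i) * Fc (I i))
        = quadraticChar (ZMod p) (redMod p l hl0 (-3 * a)) := by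
      intro i
      obtain ⟨v, hv⟩ := hgood a i fun h => by
        have := hprod i (Finset.mem_univ _)
        rw [h] at this
        simp at this
      have hx : redMod p l hl0 (Fc (I i) * v) ≠ 0 :=
        (isUnit_iff_redMod hl0 _).mp ((hF _).mul v.isUnit)
      have he : ((c (I i) * Fc (I i) : ℤ) : ZMod p)
          = redMod p l hl0 (-3 * a) * redMod p l hl0 (Fc (I i) * v) ^ 2 := by
        rw [← map_intCast (redMod p l hl0), ← map_pow, ← map_mul]
        congr 1
        push_cast
        linear_combination (Fc (I i) : ZMod (p ^ l)) * hv
      rw [legendreSym, he, map_mul, quadraticChar_sq_one' hx, mul_one]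
    intro i j
    rw [hq i, hq j]
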